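/- arXiv:1407.7787 — 2 statements merged into one kernel-verified Lean document; each statement's English description precedes it below -/
import Mathlib

section
/- In the halving setting, for every n ≥ 1 one has O_{T̄}(n) = O^h_T(2n) + (1/2)·O^g_T(n) + O^s_T(n), where O_{T̄}(n) is the number of closed orbits of length n under T̄. -/
open Function

/-- `F_T(n)`: the number of points of period `n`, i.e. of `x` with `T^[n] x = x`. -/
noncomputable def numPer {X : Type*} (T : X → X) (n : ℕ) : ℕ :=
  Nat.card {x : X // T^[n] x = x}

/-- `τ` is a closed orbit of length `n` under `T`: a set of the form
`{x, T x, …, T^[n-1] x}` of cardinality exactly `n` with `T^[n] x = x`. -/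
def IsClosedOrbit {X : Type*} (T : X → X) (n : ℕ) (τ : Set X) : Prop :=
  ∃ x : X, T^[n] x = x ∧ τ = {y | ∃ k < n, T^[k] x = y} ∧ τ.ncard = n

/-- `O_T(n)`: the number of closed orbits of length `n` under `T`. -/
noncomputable def numOrb {X : Type*} (T : X → X) (n : ℕ) : ℕ :=
  Nat.card {τ : Set X // IsClosedOrbit T n τ}

/-- The quotient `X̄` of `X` by the equivalence relation `x ∼ ι x`
(it carries the quotient topology). -/
abbrev HalfQuot {X : Type*} (ι : X → X) : Type _ := Quot (fun x y : X => ι x = y)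

/-- The quotient map `π : X → X̄`. -/
abbrev halfProj {X : Type*} (ι : X → X) : X → HalfQuot ι := Quot.mk _

/-- The closed orbit `τ` survives: `ι` fixes it pointwise. -/
def OrbitSurvives {X : Type*} (ι : X → X) (τ : Set X) : Prop := ∀ x ∈ τ, ι x = x

/-- The closed orbit `τ` (of length `n` under `T`) is glued:
`ι '' τ` is a closed orbit of length `n` disjoint from `τ`. -/
def OrbitGlued {X : Type*} (T ι : X → X) (n : ℕ) (τ : Set X) : Prop :=
  IsClosedOrbit T n (ι '' τ) ∧ Disjoint τ (ι '' τ)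

/-- The closed orbit `τ` is halved: `ι '' τ = τ` but `ι` is not the identity on `τ`. -/
def OrbitHalved {X : Type*} (ι : X → X) (τ : Set X) : Prop :=
  ι '' τ = τ ∧ ¬ OrbitSurvives ι τ

/-- `O^s_T(n)`: the number of closed orbits of length `n` under `T` that survive. -/
noncomputable def numSurv {X : Type*} (T ι : X → X) (n : ℕ) : ℕ :=
  Nat.card {τ : Set X // IsClosedOrbit T n τ ∧ OrbitSurvives ι τ}

/-- `O^g_T(n)`: the number of closed orbits of length `n` under `T` that are glued. -/
noncomputable def numGlued {X : Type*} (T ι : X → X) (n : ℕ) : ℕ :=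
  Nat.card {τ : Set X // IsClosedOrbit T n τ ∧ OrbitGlued T ι n τ}

/-- `O^h_T(n)`: the number of closed orbits of length `n` under `T` that are halved. -/
noncomputable def numHalf {X : Type*} (T ι : X → X) (n : ℕ) : ℕ :=
  Nat.card {τ : Set X // IsClosedOrbit T n τ ∧ OrbitHalved ι τ}

/-!
The map `τ ↦ π '' τ` sends closed orbits of `T` onto closed orbits of `T̄`, and `π '' τ = π '' τ'`
exactly when `τ'` is `τ` or `ι '' τ`. Distinct closed orbits are disjoint, so `τ` survives, is
halved, or is glued. On a surviving or glued orbit `π` is injective, so the length is preserved; a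
halved orbit contains no fixed point of `ι`, so `π` is two-to-one on it and its length is divided by
two. Finally `τ ↦ π '' τ` is injective on the surviving and halved orbits, where `ι '' τ = τ`, and
two-to-one on the glued ones.
-/

lemma ncard_eq_two_mul_ncard_image {α β : Type*} {f : α → β} {σ : α → α} {A : Set α}
    (hA : A.Finite) (hmaps : Set.MapsTo σ A A) (hfree : ∀ a ∈ A, σ a ≠ a)
    (hfiber : ∀ a ∈ A, ∀ b ∈ A, f a = f b ↔ b = a ∨ b = σ a) :
    A.ncard = 2 * (f '' A).ncard := by
  classical
  lift A to Finset α using hA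
  have card_fiber : ∀ b ∈ A.image f, (A.filter (f · = b)).card = 2 := by
    intro b hb
    obtain ⟨a, ha, rfl⟩ := Finset.mem_image.1 hb
    have fiber_eq : A.filter (f · = f a) = {a, σ a} := by
      ext c
      simp only [Finset.mem_filter, Finset.mem_insert, Finset.mem_singleton]
      refine ⟨fun ⟨hc, h⟩ => (hfiber a ha c hc).1 h.symm, fun h => ?_⟩
      have hc : c ∈ A := by
        rcases h with rfl | rfl
        exacts [ha, hmaps ha]
      exact ⟨hc, ((hfiber a ha c hc).2 h).symm⟩
    rw [fiber_eq, Finset.card_pair (hfree a ha).symm]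
  rw [← Finset.coe_image, Set.ncard_coe_finset, Set.ncard_coe_finset,
    Finset.card_eq_sum_card_image f A, Finset.sum_congr rfl card_fiber, Finset.sum_const,
    smul_eq_mul, mul_comm]

section ClosedOrbits

variable {X Y : Type*} {T : X → X} {S : Y → Y} {f : X → Y} {x y : X} {n : ℕ} {τ τ' : Set X}

/-- The forward orbit `{x, T x, T^[2] x, …}` of `x`. For periodic `x` it is the closed orbit
through `x`, described without reference to its length. -/
def forwardOrbit (T : X → X) (x : X) : Set X := Set.range fun k => T^[k] x

/-- The closed orbits of `T` of arbitrary positive length, encoded as the forward orbits of periodic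
points. -/
def closedOrbits (T : X → X) : Set (Set X) := forwardOrbit T '' periodicPts T

lemma mem_forwardOrbit_self (T : X → X) (x : X) : x ∈ forwardOrbit T x := ⟨0, rfl⟩

lemma image_forwardOrbit (h : Semiconj f T S) (x : X) :
    f '' forwardOrbit T x = forwardOrbit S (f x) := by
  rw [forwardOrbit, ← Set.range_comp]
  exact congrArg Set.range (funext fun k => h.iterate_right k x)

lemma forwardOrbit_eq_setOf_lt (hn : 0 < n) (hx : IsPeriodicPt T n x) :
    forwardOrbit T x = {y | ∃ k < n, T^[k] x = y} := by
  ext y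
  constructor
  · rintro ⟨k, rfl⟩
    exact ⟨k % n, Nat.mod_lt k hn, hx.iterate_mod_apply k⟩
  · rintro ⟨k, -, rfl⟩
    exact ⟨k, rfl⟩

lemma finite_forwardOrbit (hx : x ∈ periodicPts T) : (forwardOrbit T x).Finite := by
  rw [forwardOrbit_eq_setOf_lt (minimalPeriod_pos_of_mem_periodicPts hx)
    (isPeriodicPt_minimalPeriod T x)]
  exact (Set.finite_Iio _).image fun k => T^[k] x

lemma ncard_forwardOrbit (hx : x ∈ periodicPts T) :
    (forwardOrbit T x).ncard = minimalPeriod T x := by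
  rw [forwardOrbit_eq_setOf_lt (minimalPeriod_pos_of_mem_periodicPts hx)
    (isPeriodicPt_minimalPeriod T x)]
  exact (iterate_injOn_Iio_minimalPeriod (f := T)).ncard_image.trans (Set.ncard_Iio_nat _)

lemma forwardOrbit_subset_of_mem (hy : y ∈ forwardOrbit T x) :
    forwardOrbit T y ⊆ forwardOrbit T x := by
  obtain ⟨k, rfl⟩ := hy
  rintro _ ⟨j, rfl⟩
  exact ⟨j + k, iterate_add_apply T j k x⟩

lemma mem_forwardOrbit_symm (hx : x ∈ periodicPts T) (hy : y ∈ forwardOrbit T x) :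
    x ∈ forwardOrbit T y := by
  obtain ⟨n, hn, hper⟩ := hx
  rw [forwardOrbit_eq_setOf_lt hn hper] at hy
  obtain ⟨k, hk, rfl⟩ := hy
  refine ⟨n - k, ?_⟩
  change T^[n - k] (T^[k] x) = x
  rw [← iterate_add_apply, Nat.sub_add_cancel hk.le]
  exact hper

lemma forwardOrbit_eq_of_mem_closedOrbits (hτ : τ ∈ closedOrbits T) (hx : x ∈ τ) :
    forwardOrbit T x = τ := by
  obtain ⟨y, hy, rfl⟩ := hτ
  exact (forwardOrbit_subset_of_mem hx).antisymm
    (forwardOrbit_subset_of_mem (mem_forwardOrbit_symm hy hx))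

lemma eq_of_mem_closedOrbits_of_not_disjoint (hτ : τ ∈ closedOrbits T) (hτ' : τ' ∈ closedOrbits T)
    (h : ¬ Disjoint τ τ') : τ = τ' := by
  obtain ⟨x, hx, hx'⟩ := Set.not_disjoint_iff.1 h
  rw [← forwardOrbit_eq_of_mem_closedOrbits hτ hx, forwardOrbit_eq_of_mem_closedOrbits hτ' hx']

lemma nonempty_of_mem_closedOrbits (hτ : τ ∈ closedOrbits T) : τ.Nonempty := by
  obtain ⟨x, -, rfl⟩ := hτ
  exact ⟨x, mem_forwardOrbit_self T x⟩

lemma finite_of_mem_closedOrbits (hτ : τ ∈ closedOrbits T) : τ.Finite := by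
  obtain ⟨x, hx, rfl⟩ := hτ
  exact finite_forwardOrbit hx

lemma image_mem_closedOrbits (h : Semiconj f T S) (hτ : τ ∈ closedOrbits T) :
    f '' τ ∈ closedOrbits S := by
  obtain ⟨x, hx, rfl⟩ := hτ
  exact ⟨f x, h.mapsTo_periodicPts hx, (image_forwardOrbit h x).symm⟩

lemma isClosedOrbit_iff_mem_closedOrbits (hn : 0 < n) :
    IsClosedOrbit T n τ ↔ τ ∈ closedOrbits T ∧ τ.ncard = n := by
  constructor
  · rintro ⟨x, hx, rfl, hcard⟩
    exact ⟨⟨x, ⟨n, hn, hx⟩, forwardOrbit_eq_setOf_lt hn hx⟩, hcard⟩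
  · rintro ⟨⟨x, hx, rfl⟩, hcard⟩
    have hper : IsPeriodicPt T n x := by
      rw [← hcard, ncard_forwardOrbit hx]
      exact isPeriodicPt_minimalPeriod T x
    exact ⟨x, hper, forwardOrbit_eq_setOf_lt hn hper, hcard⟩

lemma finite_setOf_isClosedOrbit (h : {x | T^[n] x = x}.Finite) :
    {τ | IsClosedOrbit T n τ}.Finite := by
  refine (h.image fun x => {y | ∃ k < n, T^[k] x = y}).subset ?_
  rintro τ ⟨x, hx, rfl, -⟩
  exact ⟨x, hx, rfl⟩

end ClosedOrbits

section Halving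

variable {X : Type*} {T ι : X → X} {Tbar : HalfQuot ι → HalfQuot ι} {x y : X} {m n : ℕ}
  {τ τ' : Set X}

lemma halfProj_eq_halfProj_iff (hι : Involutive ι) :
    halfProj ι x = halfProj ι y ↔ y = x ∨ y = ι x := by
  constructor
  · intro h
    have pair_eq : s(x, ι x) = s(y, ι y) :=
      congrArg (Quot.lift (fun z => s(z, ι z)) fun a b (hab : ι a = b) => by
        rw [← hab, hι a, Sym2.eq_swap]) h
    rcases Sym2.eq_iff.1 pair_eq with ⟨rfl, -⟩ | ⟨-, rfl⟩
    exacts [Or.inl rfl, Or.inr rfl]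
  · rintro (rfl | rfl)
    exacts [rfl, Quot.sound rfl]

lemma mem_periodicPts_of_halfProj_mem (hι : Involutive ι) (hcomm : Function.Commute ι T)
    (hTbar : Semiconj (halfProj ι) T Tbar) (hx : halfProj ι x ∈ periodicPts Tbar) :
    x ∈ periodicPts T := by
  obtain ⟨n, hn, hper⟩ := hx
  have hproj : halfProj ι x = halfProj ι (T^[n] x) :=
    (hTbar.iterate_right n x).trans hper |>.symm
  rcases (halfProj_eq_halfProj_iff hι).1 hproj with h | h
  · exact ⟨n, hn, h⟩
  · refine ⟨n + n, by omega, ?_⟩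
    change T^[n + n] x = x
    rw [iterate_add_apply, h, ← hcomm.iterate_right n x, h, hι x]

lemma image_halfProj_eq_iff (hι : Involutive ι) (hcomm : Function.Commute ι T)
    (hτ : τ ∈ closedOrbits T) (hτ' : τ' ∈ closedOrbits T) :
    halfProj ι '' τ = halfProj ι '' τ' ↔ τ' = τ ∨ τ' = ι '' τ := by
  constructor
  · intro h
    obtain ⟨y, hy⟩ := nonempty_of_mem_closedOrbits hτ'
    obtain ⟨x, hx, hxy⟩ : halfProj ι y ∈ halfProj ι '' τ := h ▸ Set.mem_image_of_mem _ hy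
    rcases (halfProj_eq_halfProj_iff hι).1 hxy with rfl | rfl
    · exact Or.inl (eq_of_mem_closedOrbits_of_not_disjoint hτ' hτ
        (Set.not_disjoint_iff.2 ⟨y, hy, hx⟩))
    · exact Or.inr (eq_of_mem_closedOrbits_of_not_disjoint hτ' (image_mem_closedOrbits hcomm hτ)
        (Set.not_disjoint_iff.2 ⟨ι x, hy, Set.mem_image_of_mem ι hx⟩))
  · have hproj : halfProj ι ∘ ι = halfProj ι :=
      funext fun _ => ((halfProj_eq_halfProj_iff hι).2 (Or.inr rfl)).symm
    rintro (rfl | rfl)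
    · rfl
    · rw [← Set.image_comp, hproj]

lemma OrbitSurvives.image_eq (h : OrbitSurvives ι τ) : ι '' τ = τ :=
  (Set.image_congr h).trans (Set.image_id' τ)

lemma not_disjoint_image_of_image_eq (hτ : τ ∈ closedOrbits T) (h : ι '' τ = τ) :
    ¬ Disjoint τ (ι '' τ) := by
  rw [h, disjoint_self]
  exact (nonempty_of_mem_closedOrbits hτ).ne_empty

lemma orbitSurvives_of_apply_eq_self (hcomm : Function.Commute ι T) (hτ : τ ∈ closedOrbits T)
    (hx : x ∈ τ) (hfix : ι x = x) : OrbitSurvives ι τ := by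
  rw [← forwardOrbit_eq_of_mem_closedOrbits hτ hx]
  rintro _ ⟨k, rfl⟩
  exact (hcomm.iterate_right k x).trans (congrArg T^[k] hfix)

lemma orbitSurvives_or_orbitHalved_or_disjoint (hcomm : Function.Commute ι T)
    (hτ : τ ∈ closedOrbits T) :
    OrbitSurvives ι τ ∨ OrbitHalved ι τ ∨ Disjoint τ (ι '' τ) := by
  by_cases hdisj : Disjoint τ (ι '' τ)
  · exact Or.inr (Or.inr hdisj)
  · have himage : ι '' τ = τ :=
      (eq_of_mem_closedOrbits_of_not_disjoint hτ (image_mem_closedOrbits hcomm hτ) hdisj).symm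
    exact (em (OrbitSurvives ι τ)).imp_right fun h => Or.inl ⟨himage, h⟩

lemma ncard_image_halfProj_of_orbitSurvives (hι : Involutive ι) (h : OrbitSurvives ι τ) :
    (halfProj ι '' τ).ncard = τ.ncard := by
  refine Set.InjOn.ncard_image fun x hx y _ hxy => ?_
  rcases (halfProj_eq_halfProj_iff hι).1 hxy with hyx | hyx
  exacts [hyx.symm, (hyx.trans (h x hx)).symm]

lemma ncard_image_halfProj_of_disjoint (hι : Involutive ι) (h : Disjoint τ (ι '' τ)) :
    (halfProj ι '' τ).ncard = τ.ncard := by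
  refine Set.InjOn.ncard_image fun x hx y hy hxy => ?_
  rcases (halfProj_eq_halfProj_iff hι).1 hxy with hyx | rfl
  exacts [hyx.symm, (Set.disjoint_left.1 h hy (Set.mem_image_of_mem ι hx)).elim]

lemma OrbitHalved.ncard_eq_two_mul (hι : Involutive ι) (hcomm : Function.Commute ι T)
    (hτ : τ ∈ closedOrbits T) (h : OrbitHalved ι τ) :
    τ.ncard = 2 * (halfProj ι '' τ).ncard :=
  ncard_eq_two_mul_ncard_image (finite_of_mem_closedOrbits hτ)
    (Set.mapsTo_iff_image_subset.2 h.1.subset)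
    (fun _ hx hfix => h.2 (orbitSurvives_of_apply_eq_self hcomm hτ hx hfix))
    fun _ _ _ _ => halfProj_eq_halfProj_iff hι

lemma exists_image_halfProj_eq (hι : Involutive ι) (hcomm : Function.Commute ι T)
    (hTbar : Semiconj (halfProj ι) T Tbar) {σ : Set (HalfQuot ι)} (hσ : σ ∈ closedOrbits Tbar) :
    ∃ τ ∈ closedOrbits T, halfProj ι '' τ = σ := by
  obtain ⟨⟨x⟩, hx, rfl⟩ := hσ
  exact ⟨forwardOrbit T x, ⟨x, mem_periodicPts_of_halfProj_mem hι hcomm hTbar hx, rfl⟩,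
    image_forwardOrbit hTbar x⟩

/-- The closed orbits counted by `numSurv T ι n`. -/
def survivingOrbits (T ι : X → X) (n : ℕ) : Set (Set X) :=
  {τ | IsClosedOrbit T n τ ∧ OrbitSurvives ι τ}

/-- The closed orbits counted by `numGlued T ι n`. -/
def gluedOrbits (T ι : X → X) (n : ℕ) : Set (Set X) :=
  {τ | IsClosedOrbit T n τ ∧ OrbitGlued T ι n τ}

/-- The closed orbits counted by `numHalf T ι n`. -/
def halvedOrbits (T ι : X → X) (n : ℕ) : Set (Set X) :=
  {τ | IsClosedOrbit T n τ ∧ OrbitHalved ι τ}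

/-- The closed orbits of `T`, of any length, that `ι` maps onto themselves: the orbits on which
`τ ↦ π '' τ` is injective. -/
def invariantOrbits (T ι : X → X) : Set (Set X) := {τ ∈ closedOrbits T | ι '' τ = τ}

lemma mem_survivingOrbits_iff (hn : 0 < n) :
    τ ∈ survivingOrbits T ι n ↔ τ ∈ closedOrbits T ∧ τ.ncard = n ∧ OrbitSurvives ι τ := by
  rw [← and_assoc, ← isClosedOrbit_iff_mem_closedOrbits hn]
  rfl

lemma mem_halvedOrbits_iff (hn : 0 < n) :
    τ ∈ halvedOrbits T ι n ↔ τ ∈ closedOrbits T ∧ τ.ncard = n ∧ OrbitHalved ι τ := by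
  rw [← and_assoc, ← isClosedOrbit_iff_mem_closedOrbits hn]
  rfl

lemma mem_gluedOrbits_iff (hι : Involutive ι) (hcomm : Function.Commute ι T) (hn : 0 < n) :
    τ ∈ gluedOrbits T ι n ↔ τ ∈ closedOrbits T ∧ τ.ncard = n ∧ Disjoint τ (ι '' τ) := by
  rw [← and_assoc, ← isClosedOrbit_iff_mem_closedOrbits hn]
  refine and_congr_right fun hτ => and_iff_right_of_imp fun _ => ?_
  rw [isClosedOrbit_iff_mem_closedOrbits hn] at hτ ⊢
  exact ⟨image_mem_closedOrbits hcomm hτ.1,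
    (Set.ncard_image_of_injective τ hι.injective).trans hτ.2⟩

lemma setOf_isClosedOrbit_halfQuot (hι : Involutive ι) (hcomm : Function.Commute ι T)
    (hTbar : Semiconj (halfProj ι) T Tbar) (hn : 0 < n) :
    {σ | IsClosedOrbit Tbar n σ} =
      (halfProj ι '' ·) '' (survivingOrbits T ι n ∪ halvedOrbits T ι (2 * n)) ∪
        (halfProj ι '' ·) '' gluedOrbits T ι n := by
  have h2n : 0 < 2 * n := by omega
  ext σ
  simp only [← Set.image_union, Set.mem_image, Set.mem_union, Set.mem_ofPred_eq,
    isClosedOrbit_iff_mem_closedOrbits hn, mem_survivingOrbits_iff hn, mem_halvedOrbits_iff h2n,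
    mem_gluedOrbits_iff hι hcomm hn]
  constructor
  · rintro ⟨hσ, hcard⟩
    obtain ⟨τ, hτ, rfl⟩ := exists_image_halfProj_eq hι hcomm hTbar hσ
    refine ⟨τ, ?_, rfl⟩
    rcases orbitSurvives_or_orbitHalved_or_disjoint hcomm hτ with hsurv | hhalf | hdisj
    · exact Or.inl (Or.inl ⟨hτ, by rw [← ncard_image_halfProj_of_orbitSurvives hι hsurv, hcard],
        hsurv⟩)
    · exact Or.inl (Or.inr ⟨hτ, by rw [hhalf.ncard_eq_two_mul hι hcomm hτ, hcard], hhalf⟩)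
    · exact Or.inr ⟨hτ, by rw [← ncard_image_halfProj_of_disjoint hι hdisj, hcard], hdisj⟩
  · rintro ⟨τ, (⟨hτ, hcard, hsurv⟩ | ⟨hτ, hcard, hhalf⟩) | ⟨hτ, hcard, hdisj⟩, rfl⟩ <;>
      refine ⟨image_mem_closedOrbits hTbar hτ, ?_⟩
    · rw [ncard_image_halfProj_of_orbitSurvives hι hsurv, hcard]
    · rw [hhalf.ncard_eq_two_mul hι hcomm hτ] at hcard
      exact Nat.eq_of_mul_eq_mul_left two_pos hcard
    · rw [ncard_image_halfProj_of_disjoint hι hdisj, hcard]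

lemma survivingOrbits_union_halvedOrbits_subset (hm : 0 < m) (hn : 0 < n) :
    survivingOrbits T ι m ∪ halvedOrbits T ι n ⊆ invariantOrbits T ι := by
  rintro τ (hτ | hτ)
  · obtain ⟨hτ, -, hsurv⟩ := (mem_survivingOrbits_iff hm).1 hτ
    exact ⟨hτ, hsurv.image_eq⟩
  · obtain ⟨hτ, -, hhalf⟩ := (mem_halvedOrbits_iff hn).1 hτ
    exact ⟨hτ, hhalf.1⟩

lemma injOn_image_halfProj_invariantOrbits (hι : Involutive ι) (hcomm : Function.Commute ι T) :
    Set.InjOn (halfProj ι '' ·) (invariantOrbits T ι) := by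
  rintro τ ⟨hτ, himage⟩ τ' ⟨hτ', -⟩ h
  rcases (image_halfProj_eq_iff hι hcomm hτ hτ').1 h with h | h
  exacts [h.symm, (h.trans himage).symm]

lemma disjoint_survivingOrbits_halvedOrbits (T ι : X → X) (m n : ℕ) :
    Disjoint (survivingOrbits T ι m) (halvedOrbits T ι n) :=
  Set.disjoint_left.2 fun _ hsurv hhalf => hhalf.2.2 hsurv.2

lemma disjoint_image_invariantOrbits_image_gluedOrbits (hι : Involutive ι)
    (hcomm : Function.Commute ι T) (hn : 0 < n) :
    Disjoint ((halfProj ι '' ·) '' invariantOrbits T ι)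
      ((halfProj ι '' ·) '' gluedOrbits T ι n) := by
  rw [Set.disjoint_left]
  rintro _ ⟨τ, ⟨hτ, himage⟩, rfl⟩ ⟨τ', hglued, h⟩
  obtain ⟨hτ', -, hdisj⟩ := (mem_gluedOrbits_iff hι hcomm hn).1 hglued
  have heq : τ' = τ := by
    rcases (image_halfProj_eq_iff hι hcomm hτ hτ').1 h.symm with h | h
    exacts [h, h.trans himage]
  subst heq
  exact not_disjoint_image_of_image_eq hτ himage hdisj

lemma ncard_gluedOrbits (hι : Involutive ι) (hcomm : Function.Commute ι T) (hn : 0 < n)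
    (hfin : (gluedOrbits T ι n).Finite) :
    (gluedOrbits T ι n).ncard = 2 * ((halfProj ι '' ·) '' gluedOrbits T ι n).ncard := by
  refine ncard_eq_two_mul_ncard_image (σ := (ι '' ·)) hfin (fun τ hτ => ?_) (fun τ hτ h => ?_)
    fun τ hτ τ' hτ' => image_halfProj_eq_iff hι hcomm
      ((mem_gluedOrbits_iff hι hcomm hn).1 hτ).1 ((mem_gluedOrbits_iff hι hcomm hn).1 hτ').1
  · refine ⟨hτ.2.1, ?_⟩
    rw [OrbitGlued, hι.leftInverse.image_image τ]
    exact ⟨hτ.1, hτ.2.2.symm⟩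
  · exact not_disjoint_image_of_image_eq ((mem_gluedOrbits_iff hι hcomm hn).1 hτ).1 h hτ.2.2

lemma numOrb_halfQuot (hι : Involutive ι) (hcomm : Function.Commute ι T)
    (hTbar : Semiconj (halfProj ι) T Tbar) (hn : 0 < n) (hsurv : (survivingOrbits T ι n).Finite)
    (hhalf : (halvedOrbits T ι (2 * n)).Finite) (hglued : (gluedOrbits T ι n).Finite) :
    numOrb Tbar n = (survivingOrbits T ι n).ncard + (halvedOrbits T ι (2 * n)).ncard +
      ((halfProj ι '' ·) '' gluedOrbits T ι n).ncard := by
  have hinvariant : survivingOrbits T ι n ∪ halvedOrbits T ι (2 * n) ⊆ invariantOrbits T ι :=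
    survivingOrbits_union_halvedOrbits_subset hn (by omega)
  have hdisj := (disjoint_image_invariantOrbits_image_gluedOrbits hι hcomm hn).mono_left
    (Set.image_mono hinvariant)
  calc
    numOrb Tbar n = {σ | IsClosedOrbit Tbar n σ}.ncard := Nat.card_coe_set_eq _
    _ = ((halfProj ι '' ·) '' (survivingOrbits T ι n ∪ halvedOrbits T ι (2 * n))).ncard +
        ((halfProj ι '' ·) '' gluedOrbits T ι n).ncard := by
      rw [setOf_isClosedOrbit_halfQuot hι hcomm hTbar hn,
        Set.ncard_union_eq hdisj ((hsurv.union hhalf).image _) (hglued.image _)]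
    _ = _ := by
      rw [((injOn_image_halfProj_invariantOrbits hι hcomm).mono hinvariant).ncard_image,
        Set.ncard_union_eq (disjoint_survivingOrbits_halvedOrbits T ι n (2 * n)) hsurv hhalf]

theorem statement4_general (hι : Involutive ι) (hcomm : Function.Commute ι T)
    (hTbar : Semiconj (halfProj ι) T Tbar) (hn : 0 < n) (hfin : {x | T^[2 * n] x = x}.Finite) :
    (numOrb Tbar n : ℚ) =
      numHalf T ι (2 * n) + (1 / 2 : ℚ) * numGlued T ι n + numSurv T ι n := by
  have hfin_n : {x | T^[n] x = x}.Finite :=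
    hfin.subset fun x (hx : IsPeriodicPt T n x) => hx.const_mul 2
  have hsurv : (survivingOrbits T ι n).Finite :=
    (finite_setOf_isClosedOrbit hfin_n).subset fun _ hτ => hτ.1
  have hglued : (gluedOrbits T ι n).Finite :=
    (finite_setOf_isClosedOrbit hfin_n).subset fun _ hτ => hτ.1
  have hhalf : (halvedOrbits T ι (2 * n)).Finite :=
    (finite_setOf_isClosedOrbit hfin).subset fun _ hτ => hτ.1
  have numSurv_eq : numSurv T ι n = (survivingOrbits T ι n).ncard := Nat.card_coe_set_eq _
  have numHalf_eq : numHalf T ι (2 * n) = (halvedOrbits T ι (2 * n)).ncard :=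
    Nat.card_coe_set_eq _
  have numGlued_eq : numGlued T ι n = (gluedOrbits T ι n).ncard := Nat.card_coe_set_eq _
  rw [numOrb_halfQuot hι hcomm hTbar hn hsurv hhalf hglued, numSurv_eq, numHalf_eq, numGlued_eq,
    ncard_gluedOrbits hι hcomm hn hglued]
  push_cast
  ring

end Halving

theorem statement4
    {X : Type*} [MetricSpace X] [CompactSpace X]
    (T : X ≃ₜ X) (hfix : ∃ x : X, T x = x)
    (hfin : ∀ n : ℕ, 1 ≤ n → {x : X | (⇑T)^[n] x = x}.Finite)
    (ι : X → X) (hcont : Continuous ι) (hinv : ι ∘ ι = id)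
    (hcomm : ι ∘ ⇑T = ⇑T ∘ ι)
    (Tbar : HalfQuot ι → HalfQuot ι)
    (hTbar : ∀ x : X, Tbar (halfProj ι x) = halfProj ι (T x))
    :
    ∀ n : ℕ, 1 ≤ n →
      (numOrb Tbar n : ℚ) =
        numHalf (⇑T) ι (2 * n) + (1 / 2 : ℚ) * numGlued (⇑T) ι n + numSurv (⇑T) ι n := by
  intro n hn
  exact statement4_general (congrFun hinv) (congrFun hcomm) (fun x => (hTbar x).symm) hn
    (hfin (2 * n) (by omega))
end

section
/- Let λ, η, c be positive real numbers with λ > 1 and such that one of the following holds: (i) η = λ and c ≥ 1/2; (ii) λ < η < λ²; (iii) η = λ² and 0 < c ≤ 1. Then there exist a topological dynamical system (X,T) and a continuous involution ι : X → X commuting with T such that O_T(n)/λ^n → 1 and O_{T̄}(n)/(c·η^n) → 1 as n → ∞, where (X̄,T̄) is the halved system. -/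
open Function

/-!
The space is the one-point compactification of a countable disjoint union of finite cycles, on which
`T` fixes `∞` and advances every cycle by one step. The involution exchanges the two members of
`b n` pairs of cycles of length `n`, each pair becoming one cycle of length `n` in the quotient, and
rotates `e n` cycles of length `2 * n` by half a turn, each becoming one cycle of length `n`. So the
orbit counts of length `n > 1` are `2 * b n + e (n / 2)` upstairs, where the second term is present
only for even `n`, and `b n + e n` downstairs. The numbers `b n` and `e n` are obtained by rounding
down nonnegative real sequences, at the cost of a bounded error. For `η < λ²` take
`b n = λ ^ n / 2`, because `e (n / 2)` is then negligible against `λ ^ n`; the pairs alone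
contribute `λ ^ n / 2` downstairs, whence the condition `1 / 2 ≤ c` for `η = λ`. For `η = λ²` the
term `e (n / 2)`, about `c * λ ^ n`, is subtracted from the pairs, whence the condition `c ≤ 1`.
-/

open Filter Asymptotics Topology TopologicalSpace OnePoint

section Asymptotics

/-- The sequence with generating function `u(z²)`: the terms of `u` are moved to the even indices,
and the odd indices carry `0`. If `u m` counts the cycles of length `2 * m`, then `expandTwo u n`
counts the cycles of length `n`. -/
def expandTwo {R : Type*} [Zero R] (u : ℕ → R) (n : ℕ) : R :=
  if Even n then u (n / 2) else 0

lemma expandTwo_geom {R : Type*} [MonoidWithZero R] (C r : R) (n : ℕ) :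
    expandTwo (fun m ↦ C * (r ^ 2) ^ m) n = if Even n then C * r ^ n else 0 := by
  unfold expandTwo
  split_ifs with hn
  · simp only [← pow_mul, Nat.two_mul_div_two_of_even hn]
  · rfl

lemma natFloor_expandTwo {R : Type*} [Semiring R] [LinearOrder R] [IsStrictOrderedRing R]
    [FloorSemiring R] (u : ℕ → R) (n : ℕ) :
    expandTwo (fun m ↦ ⌊u m⌋₊) n = ⌊expandTwo u n⌋₊ := by
  unfold expandTwo
  split_ifs
  · rfl
  · exact Nat.floor_zero.symm

lemma isLittleO_expandTwo_geom {r s : ℝ} (C : ℝ) (hr : 0 ≤ r) (hrs : r < s ^ 2) (hs : 0 ≤ s) :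
    expandTwo (fun m ↦ C * r ^ m) =o[atTop] fun n ↦ s ^ n := by
  have hsqrt : √r < s := (Real.sqrt_lt' (by nlinarith)).2 hrs
  have hbound : expandTwo (fun m ↦ C * r ^ m) =O[atTop] fun n ↦ √r ^ n := by
    refine IsBigO.of_bound |C| (Eventually.of_forall fun n ↦ ?_)
    rw [← Real.sq_sqrt hr, expandTwo_geom, Real.sq_sqrt hr]
    split_ifs
    · rw [norm_mul, Real.norm_eq_abs C]
    · simp only [norm_zero]
      positivity
  exact hbound.trans_isLittleO (isLittleO_pow_pow_of_lt_left (Real.sqrt_nonneg r) hsqrt)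

variable {α : Type*} {l : Filter α} {f g h : α → ℝ}

lemma isBigO_natFloor_sub (hf : ∀ x, 0 ≤ f x) :
    (fun x ↦ (⌊f x⌋₊ : ℝ) - f x) =O[l] fun _ ↦ (1 : ℝ) :=
  IsBigO.of_bound 1 <| Eventually.of_forall fun x ↦ by
    simpa using Nat.abs_floor_sub_le (hf x)

lemma isEquivalent_mul_natFloor_add_natFloor (a : ℝ) (hf : ∀ x, 0 ≤ f x) (hg : ∀ x, 0 ≤ g x)
    (hh : Tendsto h l atTop) (hfg : (fun x ↦ a * f x + g x) ~[l] h) :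
    (fun x ↦ a * (⌊f x⌋₊ : ℝ) + (⌊g x⌋₊ : ℝ)) ~[l] h := by
  have herror : (fun x ↦ a * ((⌊f x⌋₊ : ℝ) - f x) + ((⌊g x⌋₊ : ℝ) - g x)) =o[l] h :=
    (((isBigO_natFloor_sub hf).const_mul_left a).add (isBigO_natFloor_sub hg)).trans_isLittleO
      ((isLittleO_one_left_iff ℝ).2 (tendsto_norm_atTop_atTop.comp hh))
  refine (hfg.add_isLittleO herror).congr_left (Eventually.of_forall fun x ↦ ?_)
  simp only [Pi.add_apply]
  ring

lemma isLittleO_of_le_geom {b : ℕ → ℝ} {r s : ℝ} (hb₀ : ∀ n, 0 ≤ b n) (hb : ∀ n, b n ≤ r ^ n)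
    (hr : 0 ≤ r) (hrs : r < s) : b =o[atTop] fun n ↦ s ^ n := by
  have hbr : b =O[atTop] fun n ↦ r ^ n := IsBigO.of_bound' <| Eventually.of_forall fun n ↦ by
    rw [Real.norm_of_nonneg (hb₀ n)]
    exact (hb n).trans (le_abs_self _)
  exact hbr.trans_isLittleO (isLittleO_pow_pow_of_lt_left hr hrs)

variable {lam eta c : ℝ}

lemma isEquivalent_geom_add_expandTwo_geom (C : ℝ) {r : ℝ} (hlam : 0 ≤ lam) (hr : 0 ≤ r)
    (hlt : r < lam ^ 2) :
    (fun n ↦ 2 * (lam ^ n / 2) + expandTwo (fun m ↦ C * r ^ m) n) ~[atTop]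
      (fun n ↦ lam ^ n) := by
  simp only [mul_div_cancel₀ _ (two_ne_zero' ℝ)]
  exact IsEquivalent.refl.add_isLittleO (isLittleO_expandTwo_geom C hr hlt hlam)

lemma isEquivalent_add_geom_of_le_geom {b : ℕ → ℝ} (hb₀ : ∀ n, 0 ≤ b n) (hb : ∀ n, b n ≤ lam ^ n)
    (hlam : 0 ≤ lam) (hlt : lam < eta) (hc : c ≠ 0) :
    (fun n ↦ b n + c * eta ^ n) ~[atTop] (fun n ↦ c * eta ^ n) :=
  ((isLittleO_of_le_geom hb₀ hb hlam hlt).const_mul_right hc).add_isEquivalent IsEquivalent.refl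

lemma expandTwo_geom_mem_Icc (hlam : 0 ≤ lam) (hc₀ : 0 ≤ c) (hc₁ : c ≤ 1) (n : ℕ) :
    expandTwo (fun m ↦ c * (lam ^ 2) ^ m) n ∈ Set.Icc 0 (lam ^ n) := by
  have hpow : 0 ≤ lam ^ n := by positivity
  rw [expandTwo_geom]
  split_ifs
  · exact ⟨by positivity, mul_le_of_le_one_left hpow hc₁⟩
  · exact ⟨le_rfl, hpow⟩

lemma exists_real_counts (hlam : 1 < lam) (hc : 0 < c)
    (hcase : (eta = lam ∧ (1 / 2 : ℝ) ≤ c) ∨ (lam < eta ∧ eta < lam ^ 2) ∨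
      (eta = lam ^ 2 ∧ c ≤ 1)) :
    ∃ b e : ℕ → ℝ, (∀ n, 0 ≤ b n) ∧ (∀ n, 0 ≤ e n) ∧
      (fun n ↦ 2 * b n + expandTwo e n) ~[atTop] (fun n ↦ lam ^ n) ∧
      (fun n ↦ b n + e n) ~[atTop] (fun n ↦ c * eta ^ n) := by
  have hlam₀ : 0 < lam := by positivity
  have hlam_sq : lam < lam ^ 2 := lt_self_pow₀ hlam one_lt_two
  have hhalf₀ (n : ℕ) : 0 ≤ lam ^ n / 2 := by positivity
  have hhalf (n : ℕ) : lam ^ n / 2 ≤ lam ^ n := half_le_self (by positivity)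
  rcases hcase with ⟨rfl, hc_half⟩ | ⟨hlt, hlt_sq⟩ | ⟨rfl, hc_one⟩
  · refine ⟨fun n ↦ eta ^ n / 2, fun n ↦ (c - 1 / 2) * eta ^ n, hhalf₀,
      fun n ↦ mul_nonneg (by linarith) (by positivity),
      isEquivalent_geom_add_expandTwo_geom _ hlam₀.le hlam₀.le hlam_sq, ?_⟩
    exact IsEquivalent.refl.congr_left (Eventually.of_forall fun n ↦ by ring)
  · have heta₀ : 0 < eta := hlam₀.trans hlt
    exact ⟨fun n ↦ lam ^ n / 2, fun n ↦ c * eta ^ n, hhalf₀, fun n ↦ by positivity,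
      isEquivalent_geom_add_expandTwo_geom c hlam₀.le heta₀.le hlt_sq,
      isEquivalent_add_geom_of_le_geom hhalf₀ hhalf hlam₀.le hlt hc.ne'⟩
  · -- Cycles rotated by half a turn already make up `c * lam ^ n` of the cycles of even length `n`,
    -- so only the remaining ones may come from exchanged pairs.
    set e : ℕ → ℝ := fun n ↦ c * (lam ^ 2) ^ n
    have he := expandTwo_geom_mem_Icc hlam₀.le hc.le hc_one
    have hb₀ (n : ℕ) : 0 ≤ (lam ^ n - expandTwo e n) / 2 := by linarith [(he n).2]
    have hb (n : ℕ) : (lam ^ n - expandTwo e n) / 2 ≤ lam ^ n := by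
      linarith [(he n).1, hhalf n]
    refine ⟨fun n ↦ (lam ^ n - expandTwo e n) / 2, e, hb₀, fun n ↦ by positivity, ?_,
      isEquivalent_add_geom_of_le_geom hb₀ hb hlam₀.le hlam_sq hc.ne'⟩
    exact IsEquivalent.refl.congr_left (Eventually.of_forall fun n ↦ by ring)

lemma exists_nat_counts (hlam : 1 < lam) (hc : 0 < c)
(hcase : (eta = lam ∧ (1 / 2 : ℝ) ≤ c) ∨ (lam < eta ∧ eta < lam ^ 2) ∨
      (eta = lam ^ 2 ∧ c ≤ 1)) :
    ∃ b e : ℕ → ℕ,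
      (fun n ↦ ((2 * b n + expandTwo e n : ℕ) : ℝ)) ~[atTop] (fun n ↦ lam ^ n) ∧
      (fun n ↦ ((b n + e n : ℕ) : ℝ)) ~[atTop] (fun n ↦ c * eta ^ n) := by
  obtain ⟨b, e, hb, he, hT, hTbar⟩ := exists_real_counts hlam hc hcase
  have heta : 1 < eta := by
    rcases hcase with ⟨rfl, -⟩ | ⟨hlt, -⟩ | ⟨rfl, -⟩
    exacts [hlam, hlam.trans hlt, one_lt_pow₀ hlam two_ne_zero]
  have he_expand (n : ℕ) : 0 ≤ expandTwo e n := by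
    unfold expandTwo
    split_ifs
    exacts [he _, le_rfl]
  refine ⟨fun n ↦ ⌊b n⌋₊, fun n ↦ ⌊e n⌋₊, ?_, ?_⟩
  · simpa only [Nat.cast_add, Nat.cast_mul, Nat.cast_ofNat, natFloor_expandTwo] using
      isEquivalent_mul_natFloor_add_natFloor 2 hb he_expand
        (tendsto_pow_atTop_atTop_of_one_lt hlam) hT
  · simpa only [Nat.cast_add, one_mul] using
      isEquivalent_mul_natFloor_add_natFloor 1 hb he
        ((tendsto_pow_atTop_atTop_of_one_lt heta).const_mul_atTop hc)
        (by simpa only [one_mul] using hTbar)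

end Asymptotics

section Orbits

variable {X Y : Type*} {S : X → X} {R : Y → Y}

lemma isClosedOrbit_image (φ : X ≃ Y) (hφ : Semiconj φ S R) {n : ℕ} {τ : Set X}
    (hτ : IsClosedOrbit S n τ) : IsClosedOrbit R n (φ '' τ) := by
  obtain ⟨x, hx, rfl, hcard⟩ := hτ
  refine ⟨φ x, ?_, ?_, ?_⟩
  · rw [← (hφ.iterate_right n).eq, hx]
  · ext y
    simp only [Set.mem_image, Set.mem_ofPred_eq, ← (hφ.iterate_right _).eq]
    constructor
    · rintro ⟨_, ⟨k, hk, rfl⟩, rfl⟩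
      exact ⟨k, hk, rfl⟩
    · rintro ⟨k, hk, rfl⟩
      exact ⟨_, ⟨k, hk, rfl⟩, rfl⟩
  · rw [Set.ncard_image_of_injective _ φ.injective, hcard]

lemma numOrb_congr (φ : X ≃ Y) (hφ : Semiconj φ S R) (n : ℕ) : numOrb S n = numOrb R n := by
  have hφ_symm : Semiconj φ.symm R S := fun y ↦
    φ.symm_apply_eq.2 (by rw [hφ.eq, φ.apply_symm_apply])
  refine Nat.card_congr ((Equiv.Set.congr φ).subtypeEquiv fun τ ↦
    ⟨isClosedOrbit_image φ hφ, fun hτ ↦ ?_⟩)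
  have := isClosedOrbit_image φ.symm hφ_symm hτ
  rwa [Equiv.Set.congr_apply, φ.symm_image_image] at this

lemma numOrb_halfQuot_eq {ι : X → X} {Tbar : HalfQuot ι → HalfQuot ι}
    (hTbar : ∀ x, Tbar (halfProj ι x) = halfProj ι (S x)) {f : X → Y} (hf : Surjective f)
    (hfibre : ∀ x y, f x = f y ↔ x = y ∨ ι x = y) (hfS : Semiconj f S R) (n : ℕ) :
    numOrb Tbar n = numOrb R n := by
  let f' : HalfQuot ι → Y := Quot.lift f fun x y h ↦ (hfibre x y).2 (Or.inr h)
  have hf'_inj : Injective f' := by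
    rintro ⟨x⟩ ⟨y⟩ hxy
    rcases (hfibre x y).1 hxy with rfl | h
    exacts [rfl, Quot.sound h]
  have hf'_surj : Surjective f' := fun y ↦ (hf y).imp' (halfProj ι) fun _ ↦ id
  refine numOrb_congr (Equiv.ofBijective f' ⟨hf'_inj, hf'_surj⟩) ?_ n
  rintro ⟨x⟩
  exact (congrArg f' (hTbar x)).trans (hfS x)

end Orbits

section OnePoint

variable {Y Z : Type*}

lemma surjective_onePointMap {f : Y → Z} (hf : Surjective f) : Surjective (OnePoint.map f) := by
  intro z
  induction z using OnePoint.rec with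
  | infty => exact ⟨∞, rfl⟩
  | coe z =>
    obtain ⟨y, rfl⟩ := hf z
    exact ⟨y, rfl⟩

variable [TopologicalSpace Y] [DiscreteTopology Y] [TopologicalSpace Z] [DiscreteTopology Z]

lemma continuous_onePointMap_of_injective {f : Y → Z} (hf : Injective f) :
    Continuous (OnePoint.map f) := by
  refine OnePoint.continuous_map continuous_of_discreteTopology ?_
  simpa only [coclosedCompact_eq_cocompact, cocompact_eq_cofinite] using hf.tendsto_cofinite

lemma metrizableSpace_onePoint [Countable Y] : MetrizableSpace (OnePoint Y) := by
  obtain ⟨g, hg⟩ := exists_injective_nat Y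
  exact ((continuous_onePointMap_of_injective hg).isClosedEmbedding
    (Option.map_injective hg)).isEmbedding.metrizableSpace

end OnePoint

section CycleUnion

/-- The disjoint union of the cycles `ℤ / ℓ i`, with the discrete topology. As `ZMod 0 = ℤ`, the
indices with `ℓ i = 0` contribute infinite orbits. -/
structure CycleUnion {I : Type*} (ℓ : I → ℕ) where
  index : I
  position : ZMod (ℓ index)

namespace CycleUnion

variable {I : Type*} {ℓ : I → ℕ}

lemma mk_injective (i : I) : Injective (mk (ℓ := ℓ) i) := by
  intro x y hxy
  cases hxy
  rfl

instance : TopologicalSpace (CycleUnion ℓ) := ⊥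

instance : DiscreteTopology (CycleUnion ℓ) := ⟨rfl⟩

instance [Countable I] : Countable (CycleUnion ℓ) := by
  have (n : ℕ) : Countable (ZMod n) := ZMod.intCast_surjective.countable
  have hmk : Surjective fun p : Σ i, ZMod (ℓ i) ↦ (⟨p.1, p.2⟩ : CycleUnion ℓ) :=
    fun p ↦ ⟨⟨p.index, p.position⟩, rfl⟩
  exact hmk.countable

variable (ℓ) in
/-- The homeomorphism of the one-point compactification that fixes `∞` and advances every cycle by
one step. -/
def rotate : OnePoint (CycleUnion ℓ) ≃ₜ OnePoint (CycleUnion ℓ) :=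
  Homeomorph.onePointCongr <| Homeomorph.ofDiscrete
    { toFun p := ⟨p.index, p.position + 1⟩
      invFun p := ⟨p.index, p.position - 1⟩
      left_inv p := by simp only [add_sub_cancel_right]
      right_inv p := by simp only [sub_add_cancel] }

/-- The point `x` of the `i`-th cycle. -/
def point (i : I) (x : ZMod (ℓ i)) : OnePoint (CycleUnion ℓ) :=
  OnePoint.some ⟨i, x⟩

lemma point_injective (i : I) : Injective (point (ℓ := ℓ) i) :=
  OnePoint.coe_injective.comp (mk_injective i)

lemma rotate_point (i : I) (x : ZMod (ℓ i)) : rotate ℓ (point i x) = point i (x + 1) := rfl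

lemma iterate_rotate_point (i : I) (x : ZMod (ℓ i)) (k : ℕ) :
    (rotate ℓ)^[k] (point i x) = point i (x + (k : ZMod (ℓ i))) := by
  induction k with
  | zero => rw [iterate_zero_apply, Nat.cast_zero, add_zero]
  | succ k ih => rw [iterate_succ_apply', ih, rotate_point, Nat.cast_succ, add_assoc]

lemma iterate_rotate_point_eq_self_iff {i : I} {x : ZMod (ℓ i)} {k : ℕ} :
    (rotate ℓ)^[k] (point i x) = point i x ↔ ℓ i ∣ k := by
  rw [iterate_rotate_point, (point_injective i).eq_iff, add_eq_left, ZMod.natCast_eq_zero_iff]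

lemma orbit_point {i : I} (x : ZMod (ℓ i)) {n : ℕ} (hn : 0 < n) (hdvd : ℓ i ∣ n) :
    {y | ∃ k < n, (rotate ℓ)^[k] (point i x) = y} = Set.range (point i) := by
  have : NeZero (ℓ i) := ⟨(Nat.pos_of_dvd_of_pos hdvd hn).ne'⟩
  ext y
  constructor
  · rintro ⟨k, -, rfl⟩
    exact ⟨x + (k : ZMod (ℓ i)), (iterate_rotate_point i x k).symm⟩
  · rintro ⟨z, rfl⟩
    refine ⟨(z - x).val, (ZMod.val_lt (z - x)).trans_le (Nat.le_of_dvd hn hdvd), ?_⟩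
    rw [iterate_rotate_point, ZMod.natCast_zmod_val, add_sub_cancel]

lemma ncard_range_point (i : I) : (Set.range (point (ℓ := ℓ) i)).ncard = ℓ i := by
  rw [Set.ncard_range_of_injective (point_injective i), Nat.card_zmod]

lemma isClosedOrbit_rotate_iff {n : ℕ} (hn : 1 < n) {τ : Set (OnePoint (CycleUnion ℓ))} :
    IsClosedOrbit (rotate ℓ) n τ ↔ ∃ i, ℓ i = n ∧ Set.range (point i) = τ := by
  have hn₀ : 0 < n := by positivity
  constructor
  · rintro ⟨x, hx, rfl, hcard⟩
    induction x using OnePoint.rec with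
    | infty =>
      have hfix (k : ℕ) : (rotate ℓ)^[k] ∞ = ∞ := iterate_fixed rfl k
      have horbit : {y | ∃ k < n, (rotate ℓ)^[k] ∞ = y} ⊆ {∞} := by
        rintro y ⟨k, -, rfl⟩
        exact hfix k
      have := Set.ncard_le_ncard horbit
      rw [Set.ncard_singleton, hcard] at this
      omega
    | coe p =>
      obtain ⟨i, x⟩ := p
      have horbit := orbit_point x hn₀ (iterate_rotate_point_eq_self_iff.1 hx)
      refine ⟨i, ?_, horbit.symm⟩
      exact (ncard_range_point i).symm.trans ((congrArg Set.ncard horbit.symm).trans hcard)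
  · rintro ⟨i, rfl, rfl⟩
    exact ⟨point i 0, iterate_rotate_point_eq_self_iff.2 dvd_rfl,
      (orbit_point 0 hn₀ dvd_rfl).symm, ncard_range_point i⟩

lemma range_point_injective : Injective fun i ↦ Set.range (point (ℓ := ℓ) i) := by
  intro i j hij
  obtain ⟨x, hx⟩ : point i 0 ∈ Set.range (point (ℓ := ℓ) j) := by
    rw [← show Set.range (point i) = Set.range (point j) from hij]
    exact Set.mem_range_self 0
  exact congrArg index (OnePoint.coe_injective hx).symm

theorem numOrb_rotate {n : ℕ} (hn : 1 < n) : numOrb (rotate ℓ) n = Nat.card {i // ℓ i = n} := by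
  have horbits : {τ | IsClosedOrbit (rotate ℓ) n τ} =
      (fun i ↦ Set.range (point i)) '' {i | ℓ i = n} :=
    Set.ext fun τ ↦ isClosedOrbit_rotate_iff hn
  calc numOrb (rotate ℓ) n = Set.ncard {τ | IsClosedOrbit (rotate ℓ) n τ} := rfl
    _ = Set.ncard {i | ℓ i = n} := by
      rw [horbits, Set.ncard_image_of_injective _ range_point_injective]

lemma finite_fixedPoints_iterate_rotate (hℓ : ∀ m, {i | ℓ i = m}.Finite) {n : ℕ} (hn : 0 < n) :
    {x | (rotate ℓ)^[n] x = x}.Finite := by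
  have hdivisors : {i | ℓ i ∣ n}.Finite :=
    (n.divisors.finite_toSet.biUnion fun m _ ↦ hℓ m).subset fun i hi ↦
      Set.mem_biUnion (Nat.mem_divisors.2 ⟨hi, hn.ne'⟩) rfl
  have hcycles : (⋃ i ∈ {i | ℓ i ∣ n}, Set.range (point (ℓ := ℓ) i)).Finite :=
    hdivisors.biUnion fun i hi ↦
      have : NeZero (ℓ i) := ⟨(Nat.pos_of_dvd_of_pos hi hn).ne'⟩
      Set.finite_range _
  refine (hcycles.insert ∞).subset fun x hx ↦ ?_
  induction x using OnePoint.rec with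
  | infty => exact Set.mem_insert _ _
  | coe p =>
    exact Or.inr (Set.mem_biUnion (iterate_rotate_point_eq_self_iff.1 hx) (Set.mem_range_self p.2))

end CycleUnion

end CycleUnion

section DoubleCover

variable {A B : Type*} (p : A → ℕ) (q : B → ℕ)

/-- The cycle lengths of the halved system: cycles of length `p a`, which are covered by two
disjoint cycles of the same length, and cycles of length `q b`, which are covered by one cycle of
twice the length. -/
def baseLength : A ⊕ B → ℕ := Sum.elim p q

/-- The cycle lengths of the covering system: for each `a` a pair of cycles of length `p a`, and for
each `b` one cycle of length `2 * q b`. -/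
def coverLength : (A × Bool) ⊕ B → ℕ := Sum.elim (fun a ↦ p a.1) (fun b ↦ 2 * q b)

variable {p q}

/-- The involution of the covering system: it exchanges the two cycles of each pair and rotates each
cycle of length `2 * q b` by half a turn. -/
def deck : CycleUnion (coverLength p q) → CycleUnion (coverLength p q)
  | ⟨.inl (a, s), x⟩ => ⟨.inl (a, !s), x⟩
  | ⟨.inr b, x⟩ => ⟨.inr b, x + (q b : ℕ)⟩

lemma length_inr_dvd (b : B) : baseLength p q (.inr b) ∣ coverLength p q (.inr b) :=
  dvd_mul_left _ _

/-- The quotient map of `deck`: it forgets which cycle of a pair a point lies on, and reduces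
positions on a cycle of length `2 * q b` modulo `q b`. -/
def coverProj : CycleUnion (coverLength p q) → CycleUnion (baseLength p q)
  | ⟨.inl (a, _), x⟩ => ⟨.inl a, x⟩
  | ⟨.inr b, x⟩ => ⟨.inr b, ZMod.castHom (length_inr_dvd b) _ x⟩

lemma natCast_add_self_of_eq_two_mul {m n : ℕ} (hm : m = 2 * n) : (n : ZMod m) + n = 0 := by
  rw [← Nat.cast_add, ← two_mul, ← hm, ZMod.natCast_self]

lemma castHom_eq_iff_of_eq_two_mul {m n : ℕ} (hm : m = 2 * n) (hdvd : n ∣ m) {x y : ZMod m} :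
    ZMod.castHom hdvd (ZMod n) x = ZMod.castHom hdvd (ZMod n) y ↔ x = y ∨ x + n = y := by
  constructor
  · intro hxy
    obtain ⟨d, hd⟩ := ZMod.intCast_surjective (y - x)
    obtain ⟨k, rfl⟩ : (n : ℤ) ∣ d := by
      rw [← ZMod.intCast_zmod_eq_zero_iff_dvd, ← map_intCast (ZMod.castHom hdvd (ZMod n)), hd,
        map_sub, hxy, sub_self]
    have hnn := natCast_add_self_of_eq_two_mul hm
    rcases k.even_or_odd' with ⟨j, rfl | rfl⟩
    · left
      push_cast at hd
      linear_combination hd - j * hnn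
    · right
      push_cast at hd
      linear_combination hd - j * hnn
  · rintro (rfl | rfl)
    · rfl
    · rw [map_add, map_natCast, ZMod.natCast_self, add_zero]

lemma deck_involutive : Involutive (deck (p := p) (q := q)) := by
  rintro ⟨⟨a, s⟩ | b, x⟩
  · cases s <;> rfl
  · refine congrArg (CycleUnion.mk (ℓ := coverLength p q) (.inr b)) ?_
    rw [add_assoc, natCast_add_self_of_eq_two_mul (m := coverLength p q (.inr b)) rfl, add_zero]

lemma coverProj_surjective : Surjective (coverProj (p := p) (q := q)) := by
  rintro ⟨a | b, x⟩
  · exact ⟨⟨.inl (a, false), x⟩, rfl⟩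
  · obtain ⟨y, rfl⟩ := ZMod.castHom_surjective (length_inr_dvd b) x
    exact ⟨⟨.inr b, y⟩, rfl⟩

lemma coverProj_eq_iff {u v : CycleUnion (coverLength p q)} :
    coverProj u = coverProj v ↔ u = v ∨ deck u = v := by
  constructor
  · intro huv
    have hindex : (coverProj u).index = (coverProj v).index := congrArg _ huv
    obtain ⟨⟨a, s⟩ | b, x⟩ := u <;> obtain ⟨⟨a', s'⟩ | b', y⟩ := v
    · obtain rfl : a = a' := Sum.inl_injective hindex
      obtain rfl : x = y := CycleUnion.mk_injective (ℓ := baseLength p q) (.inl a) huv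
      cases s <;> cases s' <;> first | exact Or.inl rfl | exact Or.inr rfl
    · exact (Sum.inl_ne_inr hindex).elim
    · exact (Sum.inr_ne_inl hindex).elim
    · obtain rfl : b = b' := Sum.inr_injective hindex
      exact ((castHom_eq_iff_of_eq_two_mul rfl (length_inr_dvd (p := p) (q := q) b)).1
        (CycleUnion.mk_injective (ℓ := baseLength p q) (.inr b) huv)).imp (congrArg _) (congrArg _)
  · rintro (rfl | rfl)
    · rfl
    · obtain ⟨⟨a, s⟩ | b, x⟩ := u
      · rfl
      · exact congrArg (CycleUnion.mk (ℓ := baseLength p q) (.inr b))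
          ((castHom_eq_iff_of_eq_two_mul rfl (length_inr_dvd (p := p) (q := q) b)).2 (Or.inr rfl))

lemma map_deck_involutive : Involutive (OnePoint.map (deck (p := p) (q := q))) := fun x ↦ by
  rw [← comp_apply (f := OnePoint.map deck), ← OnePoint.map_comp, deck_involutive.comp_self,
    OnePoint.map_id, id]

lemma semiconj_deck_rotate : Semiconj (OnePoint.map deck) (CycleUnion.rotate (coverLength p q))
    (CycleUnion.rotate (coverLength p q)) := by
  intro x
  induction x using OnePoint.rec with
  | infty => rfl
  | coe u =>
    obtain ⟨⟨a, s⟩ | b, x⟩ := u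
    · rfl
    · exact congrArg (CycleUnion.point (ℓ := coverLength p q) (.inr b)) (add_right_comm _ _ _)

lemma semiconj_coverProj_rotate : Semiconj (OnePoint.map coverProj)
    (CycleUnion.rotate (coverLength p q)) (CycleUnion.rotate (baseLength p q)) := by
  intro x
  induction x using OnePoint.rec with
  | infty => rfl
  | coe u =>
    obtain ⟨⟨a, s⟩ | b, x⟩ := u
    · rfl
    · have hstep : ZMod.castHom (length_inr_dvd (p := p) b) (ZMod (q b)) (x + 1) =
          ZMod.castHom (length_inr_dvd (p := p) b) (ZMod (q b)) x + 1 := by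
        rw [map_add, map_one]
      exact congrArg (CycleUnion.point (ℓ := baseLength p q) (.inr b)) hstep

lemma map_coverProj_eq_iff {x y : OnePoint (CycleUnion (coverLength p q))} :
    OnePoint.map coverProj x = OnePoint.map coverProj y ↔ x = y ∨ OnePoint.map deck x = y := by
  induction x using OnePoint.rec <;> induction y using OnePoint.rec <;>
    simp [coverProj_eq_iff]

end DoubleCover

section Counting

variable {A B : Type*} (p : A → ℕ) (q : B → ℕ)

lemma card_fiber_sumElim (n : ℕ) [Finite {a // p a = n}] [Finite {b // q b = n}] :
    Nat.card {i // Sum.elim p q i = n} = Nat.card {a // p a = n} + Nat.card {b // q b = n} := by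
  let φ : {i // Sum.elim p q i = n} ≃ {a // p a = n} ⊕ {b // q b = n} := Equiv.subtypeSum
  rw [Nat.card_congr φ, Nat.card_sum]

lemma card_fiber_comp_fst (n : ℕ) :
    Nat.card {i : A × Bool // p i.1 = n} = 2 * Nat.card {a // p a = n} := by
  rw [Nat.card_congr (Equiv.prodSubtypeFstEquivSubtypeProd (p := fun a ↦ p a = n)), Nat.card_prod,
    Nat.card_eq_fintype_card (α := Bool), Fintype.card_bool, mul_comm]

lemma card_fiber_two_mul (n : ℕ) :
    Nat.card {b // 2 * q b = n} = expandTwo (fun m ↦ Nat.card {b // q b = m}) n := by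
  unfold expandTwo
  split_ifs with hn
  · exact Nat.card_congr (Equiv.subtypeEquivRight fun b ↦ by grind)
  · have : IsEmpty {b // 2 * q b = n} := ⟨fun b ↦ hn ⟨q b, by omega⟩⟩
    exact Nat.card_of_isEmpty

lemma finite_fiber_comp_fst (n : ℕ) [Finite {a // p a = n}] :
    Finite {i : A × Bool // p i.1 = n} :=
  Finite.of_equiv _ (Equiv.prodSubtypeFstEquivSubtypeProd (p := fun a ↦ p a = n)).symm

lemma finite_fiber_two_mul (n : ℕ) [Finite {b // q b = n / 2}] : Finite {b // 2 * q b = n} :=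
  Finite.of_injective (β := {b // q b = n / 2}) (fun b ↦ ⟨b, by omega⟩) fun _ _ h ↦
    Subtype.ext (Subtype.mk.inj h)

variable [∀ n, Finite {a // p a = n}] [∀ n, Finite {b // q b = n}]

lemma finite_fiber_coverLength (n : ℕ) : {i | coverLength p q i = n}.Finite := by
  have := finite_fiber_comp_fst p n
  have := finite_fiber_two_mul q n
  let φ : {i // coverLength p q i = n} ≃ {i : A × Bool // p i.1 = n} ⊕ {b // 2 * q b = n} :=
    Equiv.subtypeSum
  exact Finite.of_equiv _ φ.symm

lemma numOrb_rotate_baseLength {n : ℕ} (hn : 1 < n) :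
    numOrb (CycleUnion.rotate (baseLength p q)) n =
      Nat.card {a // p a = n} + Nat.card {b // q b = n} :=
  (CycleUnion.numOrb_rotate hn).trans (card_fiber_sumElim p q n)

lemma numOrb_rotate_coverLength {n : ℕ} (hn : 1 < n) :
    numOrb (CycleUnion.rotate (coverLength p q)) n =
      2 * Nat.card {a // p a = n} + expandTwo (fun m ↦ Nat.card {b // q b = m}) n := by
  have := finite_fiber_comp_fst p n
  have := finite_fiber_two_mul q n
  rw [CycleUnion.numOrb_rotate hn, ← card_fiber_comp_fst, ← card_fiber_two_mul]
  exact card_fiber_sumElim _ _ n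

end Counting

section Realization

lemma numOrb_halfQuot_deck {A B : Type*} (p : A → ℕ) (q : B → ℕ)
    [∀ n, Finite {a // p a = n}] [∀ n, Finite {b // q b = n}]
    {Tbar : HalfQuot (OnePoint.map (deck (p := p) (q := q))) → HalfQuot (OnePoint.map deck)}
    (hTbar : ∀ x, Tbar (halfProj _ x) =
      halfProj _ (CycleUnion.rotate (coverLength p q) x)) {n : ℕ} (hn : 1 < n) :
    numOrb Tbar n = Nat.card {a // p a = n} + Nat.card {b // q b = n} :=
  (numOrb_halfQuot_eq hTbar (surjective_onePointMap coverProj_surjective)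
    (fun _ _ ↦ map_coverProj_eq_iff) semiconj_coverProj_rotate n).trans
    (numOrb_rotate_baseLength p q hn)

theorem exists_involution_of_counts (b e : ℕ → ℕ) :
    ∃ (X : Type) (_ : MetricSpace X) (_ : CompactSpace X) (T : X ≃ₜ X) (ι : X → X),
      Continuous ι ∧ ι ∘ ι = id ∧ ι ∘ ⇑T = ⇑T ∘ ι ∧ (∃ x, T x = x) ∧
      (∀ n, 1 ≤ n → {x | (⇑T)^[n] x = x}.Finite) ∧
      (∀ n, 1 < n → numOrb (⇑T) n = 2 * b n + expandTwo e n) ∧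
      ∃ Tbar : HalfQuot ι → HalfQuot ι,
        (∀ x, Tbar (halfProj ι x) = halfProj ι (T x)) ∧
        ∀ n, 1 < n → numOrb Tbar n = b n + e n := by
  let p : (Σ n, Fin (b n)) → ℕ := Sigma.fst
  let q : (Σ n, Fin (e n)) → ℕ := Sigma.fst
  have hp (n : ℕ) : Nat.card {a // p a = n} = b n :=
    (Nat.card_congr (Equiv.sigmaSubtype n)).trans (Nat.card_fin _)
  have hq (n : ℕ) : Nat.card {a // q a = n} = e n :=
    (Nat.card_congr (Equiv.sigmaSubtype n)).trans (Nat.card_fin _)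
  have (n : ℕ) : Finite {a // p a = n} := Finite.of_equiv _ (Equiv.sigmaSubtype n).symm
  have (n : ℕ) : Finite {a // q a = n} := Finite.of_equiv _ (Equiv.sigmaSubtype n).symm
  have := metrizableSpace_onePoint (Y := CycleUnion (coverLength p q))
  let T := CycleUnion.rotate (coverLength p q)
  let ι := OnePoint.map (deck (p := p) (q := q))
  have hcomm : Semiconj ι T T := semiconj_deck_rotate
  let Tbar : HalfQuot ι → HalfQuot ι :=
    Quot.map T fun x y (hxy : ι x = y) ↦ (hcomm x).trans (congrArg T hxy)
  refine ⟨_, metrizableSpaceMetric _, inferInstance, T, ι,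
    continuous_onePointMap_of_injective deck_involutive.injective, map_deck_involutive.comp_self,
    hcomm.comp_eq, ⟨∞, rfl⟩,
    fun n hn ↦ CycleUnion.finite_fixedPoints_iterate_rotate (finite_fiber_coverLength p q) hn,
    fun n hn ↦ ?_, Tbar, fun _ ↦ rfl, fun n hn ↦ ?_⟩
  · simpa only [hp, hq] using numOrb_rotate_coverLength p q hn
  · simpa only [hp, hq] using numOrb_halfQuot_deck p q (Tbar := Tbar) (fun _ ↦ rfl) hn

end Realization

lemma tendsto_div_of_eq_of_isEquivalent {N M : ℕ → ℕ} {g : ℕ → ℝ} (hNM : ∀ n, 1 < n → N n = M n)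
    (hM : (fun n ↦ (M n : ℝ)) ~[atTop] g) (hg : ∀ n, g n ≠ 0) :
    Tendsto (fun n ↦ (N n : ℝ) / g n) atTop (𝓝 1) := by
  refine ((isEquivalent_iff_tendsto_one (Eventually.of_forall hg)).1 hM).congr' ?_
  filter_upwards [eventually_gt_atTop 1] with n hn
  rw [hNM n hn, Pi.div_apply]

theorem statement13 (lam eta c : ℝ) (hlam : 1 < lam) (heta : 0 < eta) (hc : 0 < c)
    (hcase : (eta = lam ∧ (1 / 2 : ℝ) ≤ c) ∨ (lam < eta ∧ eta < lam ^ 2) ∨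
      (eta = lam ^ 2 ∧ c ≤ 1)) :
    ∃ (X : Type) (_ : MetricSpace X) (_ : CompactSpace X) (T : X ≃ₜ X) (ι : X → X),
      Continuous ι ∧ ι ∘ ι = id ∧ ι ∘ ⇑T = ⇑T ∘ ι ∧ (∃ x : X, T x = x) ∧
      (∀ n : ℕ, 1 ≤ n → {x : X | (⇑T)^[n] x = x}.Finite) ∧
      Filter.Tendsto (fun n : ℕ => (numOrb (⇑T) n : ℝ) / lam ^ n) Filter.atTop (nhds 1) ∧
      ∃ Tbar : HalfQuot ι → HalfQuot ι,
        (∀ x : X, Tbar (halfProj ι x) = halfProj ι (T x)) ∧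
        Filter.Tendsto (fun n : ℕ => (numOrb Tbar n : ℝ) / (c * eta ^ n))
          Filter.atTop (nhds 1) := by
  obtain ⟨b, e, hcountT, hcountTbar⟩ := exists_nat_counts hlam hc hcase
  obtain ⟨X, hmetric, hcompact, T, ι, hι, hιι, hιT, hfix, hfin, hT, Tbar, hTbar, hTbar_orb⟩ :=
    exists_involution_of_counts b e
  exact ⟨X, hmetric, hcompact, T, ι, hι, hιι, hιT, hfix, hfin,
    tendsto_div_of_eq_of_isEquivalent hT hcountT fun n ↦ by positivity, Tbar, hTbar,
    tendsto_div_of_eq_of_isEquivalent hTbar_orb hcountTbar fun n ↦ by positivity⟩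
end
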